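/- arXiv:1412.4338 — 9 statements merged into one kernel-verified Lean document; each statement's English description precedes it below -/
import Mathlib

section
/- For all real numbers a, b with a ≥ 0 and b ≥ 0, and every real α > 1/2, one has (a^α − b^α)² ≤ (α²/(2α−1)) · (a − b) · (a^(2α−1) − b^(2α−1)). -/
/-!
If `f' ^ 2 ≤ g'`, then for every real `t` the function `t ^ 2 * x - 2 * t * f x + g x` has
derivative at least `(t - f') ^ 2 ≥ 0`, so it is monotone. Its increment from `x` to `y` is a
quadratic polynomial in `t`, and the nonpositivity of the discriminant is the Cauchy–Schwarz
inequality `(∫ f') ^ 2 ≤ (∫ 1) * ∫ g'`, obtained without integrating functions that are singular at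
an endpoint. The powers `f x = x ^ α` and `g x = α ^ 2 / (2 * α - 1) * x ^ (2 * α - 1)` satisfy
`f' ^ 2 = g'`.
-/

open Set

section SqDerivLe

variable {s : Set ℝ} {f g f' g' : ℝ → ℝ}

theorem monotoneOn_sq_mul_sub_mul_add_of_sq_deriv_le (hs : Convex ℝ s)
    (hf : ContinuousOn f s) (hg : ContinuousOn g s)
    (hf' : ∀ x ∈ interior s, HasDerivAt f (f' x) x)
    (hg' : ∀ x ∈ interior s, HasDerivAt g (g' x) x)
    (hle : ∀ x ∈ interior s, f' x ^ 2 ≤ g' x) (t : ℝ) :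
    MonotoneOn (fun x ↦ t ^ 2 * x - 2 * t * f x + g x) s := by
  have hderiv : ∀ x ∈ interior s, HasDerivAt (fun x ↦ t ^ 2 * x - 2 * t * f x + g x)
      (t ^ 2 * 1 - 2 * t * f' x + g' x) x := fun x hx ↦
    (((hasDerivAt_id x).const_mul (t ^ 2)).sub ((hf' x hx).const_mul (2 * t))).add (hg' x hx)
  refine monotoneOn_of_hasDerivWithinAt_nonneg hs (by fun_prop)
    (fun x hx ↦ (hderiv x hx).hasDerivWithinAt) fun x hx ↦ ?_
  calc
    0 ≤ (t - f' x) ^ 2 := sq_nonneg _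
    _ = t ^ 2 * 1 - 2 * t * f' x + f' x ^ 2 := by ring
    _ ≤ t ^ 2 * 1 - 2 * t * f' x + g' x := by gcongr; exact hle x hx

theorem sq_sub_le_sub_mul_sub_of_sq_deriv_le (hs : Convex ℝ s)
    (hf : ContinuousOn f s) (hg : ContinuousOn g s)
    (hf' : ∀ x ∈ interior s, HasDerivAt f (f' x) x)
    (hg' : ∀ x ∈ interior s, HasDerivAt g (g' x) x)
    (hle : ∀ x ∈ interior s, f' x ^ 2 ≤ g' x) {x y : ℝ} (hx : x ∈ s) (hy : y ∈ s) :
    (f y - f x) ^ 2 ≤ (y - x) * (g y - g x) := by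
  wlog hxy : x ≤ y generalizing x y
  · linarith [this hy hx (le_of_not_ge hxy)]
  have hquadratic (t : ℝ) :
      0 ≤ (y - x) * (t * t) + -(2 * (f y - f x)) * t + (g y - g x) := by
    have hmono := monotoneOn_sq_mul_sub_mul_add_of_sq_deriv_le hs hf hg hf' hg' hle t hx hy hxy
    linarith
  have hdiscrim := discrim_le_zero hquadratic
  rw [discrim] at hdiscrim
  linarith

end SqDerivLe

theorem hasDerivAt_sq_div_mul_rpow {x α : ℝ} (hx : 0 < x) (hα : α ≠ 1 / 2) :
    HasDerivAt (fun x : ℝ ↦ α ^ 2 / (2 * α - 1) * x ^ (2 * α - 1)) ((α * x ^ (α - 1)) ^ 2) x := by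
  have hα' : 2 * α - 1 ≠ 0 := fun h ↦ hα (by linarith)
  have hpow : x ^ (2 * α - 1 - 1) = (x ^ (α - 1)) ^ 2 := by
    rw [← Real.rpow_mul_natCast hx.le]
    congr 1
    push_cast
    ring
  refine ((Real.hasDerivAt_rpow_const (Or.inl hx.ne')).const_mul _).congr_deriv ?_
  rw [hpow, ← mul_assoc, div_mul_cancel₀ _ hα', mul_pow]

theorem rpow_chain_rule_ineq_general (a b α : ℝ) (ha : 0 ≤ a) (hb : 0 ≤ b)
    (h : 1 / 2 < α ∨ α ≠ 1 / 2 ∧ 0 < a ∧ 0 < b) :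
    (a ^ α - b ^ α) ^ 2 ≤
      α ^ 2 / (2 * α - 1) * (a - b) * (a ^ (2 * α - 1) - b ^ (2 * α - 1)) := by
  have hα : α ≠ 1 / 2 := h.elim ne_of_gt And.left
  have hcont {p : ℝ} (hp : 1 / 2 < α → 0 ≤ p) : ContinuousOn (fun x : ℝ ↦ x ^ p) (uIcc b a) :=
    continuousOn_id.rpow_const fun x hx ↦ h.symm.imp
      (fun ⟨_, ha, hb⟩ ↦ ((lt_min hb ha).trans_le hx.1).ne') hp
  have hpos : ∀ x ∈ interior (uIcc b a), 0 < x := fun x hx ↦ by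
    rw [uIcc, interior_Icc] at hx
    exact (le_min hb ha).trans_lt hx.1
  have hineq := sq_sub_le_sub_mul_sub_of_sq_deriv_le (convex_uIcc b a)
    (hcont fun hα ↦ by linarith) ((hcont fun hα ↦ by linarith).const_mul _)
    (fun x hx ↦ Real.hasDerivAt_rpow_const (Or.inl (hpos x hx).ne'))
    (fun x hx ↦ hasDerivAt_sq_div_mul_rpow (hpos x hx) hα) (fun _ _ ↦ le_rfl)
    left_mem_uIcc right_mem_uIcc
  linarith

/-- Lemma B.1(i): chain-rule-type inequality for real powers. -/
theorem rpow_chain_rule_ineq (a b α : ℝ) (ha : 0 ≤ a) (hb : 0 ≤ b) (hα : 1 / 2 < α) :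
    (a ^ α - b ^ α) ^ 2 ≤
      α ^ 2 / (2 * α - 1) * (a - b) * (a ^ (2 * α - 1) - b ^ (2 * α - 1)) :=
  rpow_chain_rule_ineq_general a b α ha hb (Or.inl hα)
end

section
/- For all real numbers a, b with a ≥ 0 and b ≥ 0, and every real α ≥ 1, one has |a^(2α−1)·b − a·b^(2α−1)| ≤ (1 − 1/α) · |a^(2α) − b^(2α)|. -/
/-!
For positive `a = exp x` and `b = exp y`, factoring out `exp ((p + q) * (x + y) / 2)` turns
`a ^ p * b ^ q - a ^ q * b ^ p` into a multiple of `sinh ((p - q) * t)` and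
`a ^ (p + q) - b ^ (p + q)` into the same multiple of `sinh ((p + q) * t)`, with `t = (x - y) / 2`.
Since `sinh` is convex on `[0, ∞)` and vanishes at `0`, `sinh (r * t) / r` is monotone in `r > 0`,
and the two sides compare because `|p - q| ≤ p + q`. The theorem is the case `p = 2 * α - 1`,
`q = 1`.
-/

open Real

theorem convexOn_sinh : ConvexOn ℝ (Set.Ici 0) sinh := by
  refine convexOn_of_deriv2_nonneg' (convex_Ici 0) differentiable_sinh.differentiableOn ?_ ?_
  · rw [Real.deriv_sinh]
    exact differentiable_cosh.differentiableOn
  · intro x hx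
    rw [Function.iterate_succ_apply, Function.iterate_one, Real.deriv_sinh, Real.deriv_cosh]
    exact sinh_nonneg_iff.2 hx

theorem mul_sinh_mul_le_mul_sinh_mul {r s t : ℝ} (hs : 0 ≤ s) (hsr : s ≤ r) (ht : 0 ≤ t) :
    r * sinh (s * t) ≤ s * sinh (r * t) := by
  rcases (hs.trans hsr).eq_or_lt with rfl | hr
  · simp [le_antisymm hsr hs]
  have secant : sinh (s / r * (r * t)) ≤ s / r * sinh (r * t) := by
    simpa using convexOn_sinh.2 (Set.mem_Ici.2 (by positivity : 0 ≤ r * t)) Set.self_mem_Ici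
      (div_nonneg hs hr.le) (sub_nonneg.2 ((div_le_one hr).2 hsr)) (add_sub_cancel _ _)
  calc r * sinh (s * t) = r * sinh (s / r * (r * t)) := by field_simp
    _ ≤ r * (s / r * sinh (r * t)) := by gcongr
    _ = s * sinh (r * t) := by field_simp

theorem abs_mul_abs_sinh_mul_le {r s : ℝ} (hsr : |s| ≤ |r|) (t : ℝ) :
    |r| * |sinh (s * t)| ≤ |s| * |sinh (r * t)| := by
  simpa only [abs_sinh, abs_mul] using
    mul_sinh_mul_le_mul_sinh_mul (abs_nonneg s) hsr (abs_nonneg t)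

theorem exp_rpow_mul_exp_rpow_sub (x y p q : ℝ) :
    exp x ^ p * exp y ^ q - exp x ^ q * exp y ^ p =
      2 * exp ((p + q) * ((x + y) / 2)) * sinh ((p - q) * ((x - y) / 2)) := by
  simp only [sinh_eq, ← exp_mul, ← exp_add]
  have mean_add : x * p + y * q = (p + q) * ((x + y) / 2) + (p - q) * ((x - y) / 2) := by ring
  have mean_sub : x * q + y * p = (p + q) * ((x + y) / 2) + -((p - q) * ((x - y) / 2)) := by ring
  rw [mean_add, mean_sub, exp_add, exp_add]
  ring

theorem abs_add_mul_abs_exp_rpow_mul_exp_rpow_sub_le (x y : ℝ) {p q : ℝ} (hpq : 0 ≤ p * q) :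
    |p + q| * |exp x ^ p * exp y ^ q - exp x ^ q * exp y ^ p| ≤
      |p - q| * |exp x ^ (p + q) - exp y ^ (p + q)| := by
  have pure_powers : exp x ^ (p + q) - exp y ^ (p + q) =
      2 * exp ((p + q) * ((x + y) / 2)) * sinh ((p + q) * ((x - y) / 2)) := by
    simpa using exp_rpow_mul_exp_rpow_sub x y (p + q) 0
  have abs_sub_le_abs_add : |p - q| ≤ |p + q| := sq_le_sq.1 (by linarith [add_sq p q, sub_sq p q])
  rw [exp_rpow_mul_exp_rpow_sub, pure_powers, abs_mul, abs_mul (2 * _), mul_left_comm,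
    mul_left_comm |p - q|]
  gcongr ?_ * ?_
  exact abs_mul_abs_sinh_mul_le abs_sub_le_abs_add _

theorem rpow_cross_term_ineq_general {a b p q : ℝ} (ha : 0 ≤ a) (hb : 0 ≤ b)
    (hp : 0 ≤ p) (hq : 0 ≤ q) :
    (p + q) * |a ^ p * b ^ q - a ^ q * b ^ p| ≤ |p - q| * |a ^ (p + q) - b ^ (p + q)| := by
  rcases hp.eq_or_lt with rfl | hp'
  · simp [abs_of_nonneg hq, abs_sub_comm]
  rcases hq.eq_or_lt with rfl | hq'
  · simp [abs_of_nonneg hp]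
  rcases ha.eq_or_lt with rfl | ha'
  · simp only [zero_rpow hp'.ne', zero_rpow hq'.ne', zero_mul, sub_zero, abs_zero, mul_zero]
    positivity
  rcases hb.eq_or_lt with rfl | hb'
  · simp only [zero_rpow hp'.ne', zero_rpow hq'.ne', mul_zero, sub_zero, abs_zero]
    positivity
  simpa only [exp_log ha', exp_log hb', abs_of_nonneg (add_nonneg hp hq)] using
    abs_add_mul_abs_exp_rpow_mul_exp_rpow_sub_le (log a) (log b) (mul_nonneg hp hq)

/-- Lemma B.1(ii). -/
theorem rpow_cross_term_ineq (a b α : ℝ) (ha : 0 ≤ a) (hb : 0 ≤ b) (hα : 1 ≤ α) :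
    |a ^ (2 * α - 1) * b - a * b ^ (2 * α - 1)| ≤
      (1 - 1 / α) * |a ^ (2 * α) - b ^ (2 * α)| := by
  have hα₀ : 0 < 2 * α := by linarith
  have coeff : |2 * α - 1 - 1| = 2 * α * (1 - 1 / α) := by
    rw [abs_of_nonneg (by linarith)]
    field_simp
    ring
  have cross := rpow_cross_term_ineq_general ha hb (by linarith : 0 ≤ 2 * α - 1) zero_le_one
  rw [sub_add_cancel, coeff, mul_assoc (2 * α), rpow_one, rpow_one] at cross
  exact le_of_mul_le_mul_left cross hα₀
end

section
/- For all real numbers a, b with a ≥ 0 and b ≥ 0, and every real α ≥ 1/2, one has (a^(2α−1) + b^(2α−1)) · |a − b| ≤ 4 · |a^α − b^α| · (a^α + b^α). -/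
/-! The identity `2 (p a - q b) = (p + q) (a - b) + (p - q) (a + b)` bounds `(p + q) |a - b|` by
`2 |p a - q b|` whenever `a, b ≥ 0` are ordered like `p, q`. This applies to `p = a ^ (2 * α - 1)`
and `q = b ^ (2 * α - 1)`, for which `p a - q b = (a ^ α) ^ 2 - (b ^ α) ^ 2` is a difference of
squares. -/

theorem add_mul_abs_sub_le_two_mul_abs_mul_sub_mul_of_monotoneOn {R : Type*} [Ring R]
    [LinearOrder R] [IsOrderedRing R] {f : R → R} (hf : MonotoneOn f (Set.Ici 0)) {a b : R}
    (ha : 0 ≤ a) (hb : 0 ≤ b) : (f a + f b) * |a - b| ≤ 2 * |f a * a - f b * b| := by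
  wlog hba : b ≤ a generalizing a b
  · simpa only [add_comm (f a), abs_sub_comm a, abs_sub_comm (f a * a)] using
      this hb ha (le_of_not_ge hba)
  have hsub : 0 ≤ a - b := sub_nonneg.2 hba
  have hgap : 0 ≤ (f a - f b) * (a + b) :=
    mul_nonneg (sub_nonneg.2 (hf hb ha hba)) (add_nonneg ha hb)
  calc (f a + f b) * |a - b|
      = (f a + f b) * (a - b) := by rw [abs_of_nonneg hsub]
    _ ≤ (f a + f b) * (a - b) + (f a - f b) * (a + b) := le_add_of_nonneg_right hgap
    _ = 2 * (f a * a - f b * b) := by noncomm_ring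
    _ ≤ 2 * |f a * a - f b * b| :=
        mul_le_mul_of_nonneg_left (le_abs_self _) zero_le_two

theorem rpow_two_mul_sub_one_mul_self {x α : ℝ} (hx : 0 ≤ x) (hα : α ≠ 0) :
    x ^ (2 * α - 1) * x = (x ^ α) ^ 2 := by
  have hexp : 2 * α - 1 + 1 = α * (2 : ℕ) := by push_cast; ring
  have hne : 2 * α - 1 + 1 ≠ 0 := by simpa using hα
  rw [← Real.rpow_add_one' hx hne, hexp, Real.rpow_mul_natCast hx]

/-- The constant `2` is optimal: equality holds at `α = 1 / 2`. -/
theorem rpow_sum_diff_ineq_general (a b α : ℝ) (ha : 0 ≤ a) (hb : 0 ≤ b) (hα : 1 / 2 ≤ α) :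
    (a ^ (2 * α - 1) + b ^ (2 * α - 1)) * |a - b| ≤
      2 * |a ^ α - b ^ α| * (a ^ α + b ^ α) := by
  have hα₀ : α ≠ 0 := by linarith
  have hmono : MonotoneOn (fun x : ℝ ↦ x ^ (2 * α - 1)) (Set.Ici 0) :=
    Real.monotoneOn_rpow_Ici_of_exponent_nonneg (by linarith)
  calc (a ^ (2 * α - 1) + b ^ (2 * α - 1)) * |a - b|
      ≤ 2 * |a ^ (2 * α - 1) * a - b ^ (2 * α - 1) * b| :=
        add_mul_abs_sub_le_two_mul_abs_mul_sub_mul_of_monotoneOn hmono ha hb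
    _ = 2 * |(a ^ α) ^ 2 - (b ^ α) ^ 2| := by
        rw [rpow_two_mul_sub_one_mul_self ha hα₀, rpow_two_mul_sub_one_mul_self hb hα₀]
    _ = 2 * |a ^ α - b ^ α| * (a ^ α + b ^ α) := by
        rw [sq_sub_sq, abs_mul, abs_of_nonneg (by positivity : 0 ≤ a ^ α + b ^ α)]
        ring

/-- Lemma B.1(iii). -/
theorem rpow_sum_diff_ineq (a b α : ℝ) (ha : 0 ≤ a) (hb : 0 ≤ b) (hα : 1 / 2 ≤ α) :
    (a ^ (2 * α - 1) + b ^ (2 * α - 1)) * |a - b| ≤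
      4 * |a ^ α - b ^ α| * (a ^ α + b ^ α) := by
  refine (rpow_sum_diff_ineq_general a b α ha hb hα).trans ?_
  gcongr
  norm_num
end

section
/- For every real s > 0, one has (√(1 + s²) − 1)/s − log(s + √(1 + s²)) ≤ −(s/2) · (1 − s²/10). -/
/-!
Rationalising the numerator turns the first term into `s / (1 + √(1 + s²))`, so the left-hand side
is `-(arsinh s - s / (1 + √(1 + s²)))`. The bracket has the simple derivative `1 / (1 + √(1 + s²))`,
which the tangent-line bound `√(1 + s²) ≤ 1 + s² / 2` shows to be at least `1 / 2 - s² / 8`.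
Integrating from `0` to `s` gives the bound with the Taylor constant `1 / 12` in place of `1 / 10`.
-/

theorem sqrt_one_add_sq_sub_one_div (x : ℝ) : (√(1 + x ^ 2) - 1) / x = x / (1 + √(1 + x ^ 2)) := by
  rcases eq_or_ne x 0 with rfl | hx
  · simp
  · have hr : √(1 + x ^ 2) ^ 2 = 1 + x ^ 2 := Real.sq_sqrt (by positivity)
    rw [div_eq_div_iff hx (by positivity)]
    linear_combination hr

theorem hasDerivAt_sqrt_one_add_sq (x : ℝ) :
    HasDerivAt (fun y ↦ √(1 + y ^ 2)) (x / √(1 + x ^ 2)) x := by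
  refine (((hasDerivAt_pow 2 x).const_add 1).sqrt (by positivity)).congr_deriv ?_
  field

theorem hasDerivAt_div_one_add_sqrt_one_add_sq (x : ℝ) :
    HasDerivAt (fun y ↦ y / (1 + √(1 + y ^ 2)))
      ((√(1 + x ^ 2))⁻¹ - 1 / (1 + √(1 + x ^ 2))) x := by
  have hr : √(1 + x ^ 2) ^ 2 = 1 + x ^ 2 := Real.sq_sqrt (by positivity)
  refine ((hasDerivAt_id' x).div ((hasDerivAt_sqrt_one_add_sq x).const_add 1)
    (by positivity)).congr_deriv ?_
  field_simp
  linear_combination hr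

theorem hasDerivAt_arsinh_sub_div_one_add_sqrt (x : ℝ) :
    HasDerivAt (fun y ↦ Real.arsinh y - y / (1 + √(1 + y ^ 2))) (1 / (1 + √(1 + x ^ 2))) x :=
  ((Real.hasDerivAt_arsinh x).sub (hasDerivAt_div_one_add_sqrt_one_add_sq x)).congr_deriv
    (sub_sub_cancel _ _)

theorem half_sub_sq_div_eight_le_one_div_one_add_sqrt (x : ℝ) :
    1 / 2 - x ^ 2 / 8 ≤ 1 / (1 + √(1 + x ^ 2)) := by
  have hsqrt : √(1 + x ^ 2) ≤ 1 + x ^ 2 / 2 :=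
    Real.sqrt_one_add_le (by linarith [sq_nonneg x])
  calc 1 / 2 - x ^ 2 / 8 ≤ 1 / (1 + (1 + x ^ 2 / 2)) := by
        rw [le_div_iff₀ (by positivity)]
        nlinarith [sq_nonneg (x ^ 2)]
    _ ≤ 1 / (1 + √(1 + x ^ 2)) := by gcongr

theorem monotone_arsinh_sub_div_one_add_sqrt_sub_cubic :
    Monotone fun x ↦ Real.arsinh x - x / (1 + √(1 + x ^ 2)) - (x / 2 - x ^ 3 / 24) := by
  have hcubic (x : ℝ) : HasDerivAt (fun y : ℝ ↦ y / 2 - y ^ 3 / 24) (1 / 2 - x ^ 2 / 8) x :=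
    (((hasDerivAt_id' x).div_const 2).sub ((hasDerivAt_pow 3 x).div_const 24)).congr_deriv
      (by push_cast; ring)
  exact monotone_of_hasDerivAt_nonneg
    (fun x ↦ (hasDerivAt_arsinh_sub_div_one_add_sqrt x).sub (hcubic x))
    fun x ↦ sub_nonneg.mpr (half_sub_sq_div_eight_le_one_div_one_add_sqrt x)

theorem half_sub_cube_div_twentyFour_le_arsinh_sub_div_one_add_sqrt {x : ℝ} (hx : 0 ≤ x) :
    x / 2 - x ^ 3 / 24 ≤ Real.arsinh x - x / (1 + √(1 + x ^ 2)) := by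
  simpa using monotone_arsinh_sub_div_one_add_sqrt_sub_cubic hx

theorem F_upper_bound_general (s : ℝ) (hs : 0 < s) :
    (√(1 + s ^ 2) - 1) / s - Real.log (s + √(1 + s ^ 2)) ≤ -(s / 2) * (1 - s ^ 2 / 12) :=
  calc (√(1 + s ^ 2) - 1) / s - Real.log (s + √(1 + s ^ 2))
      = -(Real.arsinh s - s / (1 + √(1 + s ^ 2))) := by
        rw [sqrt_one_add_sq_sub_one_div, Real.arsinh, neg_sub]
    _ ≤ -(s / 2 - s ^ 3 / 24) :=
        neg_le_neg (half_sub_cube_div_twentyFour_le_arsinh_sub_div_one_add_sqrt hs.le)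
    _ = -(s / 2) * (1 - s ^ 2 / 12) := by ring

/-- Upper bound for `F(s)` in the proof of Theorem 1.6. -/
theorem F_upper_bound (s : ℝ) (hs : 0 < s) :
    (Real.sqrt (1 + s ^ 2) - 1) / s - Real.log (s + Real.sqrt (1 + s ^ 2)) ≤
      -(s / 2) * (1 - s ^ 2 / 10) :=
  (F_upper_bound_general s hs).trans (by nlinarith [pow_pos hs 3])
end

section
/- For every real s with s ≥ e (Euler's number), one has (√(1 + s²) − 1)/s − log(s + √(1 + s²)) ≤ 1 − log(2s). -/
/-!
For `s > 0` the infimum `F(s) = inf_{λ > 0} (-λ + (cosh λ - 1) / s)` is attained at `λ = arsinh s`,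
where `cosh λ = √(1 + s²)`; its value there is the left-hand side of the estimate. The two terms are
controlled separately by `|s| ≤ √(1 + s²) ≤ 1 + |s|`.
-/

theorem abs_sqrt_one_add_sq_sub_one_div_le_one (x : ℝ) : |(√(1 + x ^ 2) - 1) / x| ≤ 1 := by
  have one_le_sqrt : 1 ≤ √(1 + x ^ 2) :=
    Real.one_le_sqrt.mpr (le_add_of_nonneg_right (sq_nonneg x))
  have sqrt_le : √(1 + x ^ 2) ≤ 1 + |x| := by
    simpa only [Real.norm_eq_abs, sq_abs] using sqrt_one_add_norm_sq_le x
  rw [abs_div, abs_of_nonneg (sub_nonneg.mpr one_le_sqrt)]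
  exact div_le_one_of_le₀ (sub_le_iff_le_add'.mpr sqrt_le) (abs_nonneg x)

theorem log_two_mul_le_arsinh {x : ℝ} (hx : 0 < x) : Real.log (2 * x) ≤ Real.arsinh x := by
  have le_sqrt : x ≤ √(1 + x ^ 2) :=
    Real.le_sqrt_of_sq_le (le_add_of_nonneg_left zero_le_one)
  rw [Real.log_le_iff_le_exp (by positivity), Real.exp_arsinh, two_mul]
  gcongr

theorem F_poisson_regime_general {s : ℝ} (hs : 0 < s) :
    (√(1 + s ^ 2) - 1) / s - Real.log (s + √(1 + s ^ 2)) ≤ 1 - Real.log (2 * s) :=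
  sub_le_sub (le_of_abs_le (abs_sqrt_one_add_sq_sub_one_div_le_one s)) (log_two_mul_le_arsinh hs)

/-- Poisson-regime upper bound for `F(s)`. -/
theorem F_poisson_regime (s : ℝ) (hs : Real.exp 1 ≤ s) :
    (Real.sqrt (1 + s ^ 2) - 1) / s - Real.log (s + Real.sqrt (1 + s ^ 2)) ≤
      1 - Real.log (2 * s) :=
  F_poisson_regime_general ((Real.exp_pos 1).trans_le hs)
end

section
/- For every real a ≥ 1 and every real x, one has a · (cosh(x) − 1) ≤ cosh(√a · x). -/
/-!
The series of `cosh (c * x) - 1` has no constant term, so replacing `x` by `c * x` multiplies each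
of its terms by a positive power of `c ^ 2`, hence by at least `c ^ 2` when `1 ≤ |c|`.
The theorem is the case `c = √a`.
-/

open scoped Nat

theorem hasSum_cosh_sub_one (x : ℝ) :
    HasSum (fun n : ℕ ↦ x ^ (2 * (n + 1)) / (2 * (n + 1))!) (Real.cosh x - 1) := by
  simpa using (hasSum_nat_add_iff' 1).mpr (Real.hasSum_cosh x)

theorem sq_mul_cosh_sub_one_le {c : ℝ} (hc : 1 ≤ |c|) (x : ℝ) :
    c ^ 2 * (Real.cosh x - 1) ≤ Real.cosh (c * x) - 1 := by
  refine hasSum_le (fun n ↦ ?_) ((hasSum_cosh_sub_one x).mul_left (c ^ 2))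
    (hasSum_cosh_sub_one (c * x))
  have hc_sq : 1 ≤ c ^ 2 := (one_le_sq_iff_one_le_abs c).mpr hc
  have hx : 0 ≤ x ^ (2 * (n + 1)) := (even_two_mul _).pow_nonneg x
  calc c ^ 2 * (x ^ (2 * (n + 1)) / (2 * (n + 1))!)
      ≤ (c ^ 2) ^ (n + 1) * (x ^ (2 * (n + 1)) / (2 * (n + 1))!) := by
        gcongr
        exact le_self_pow₀ hc_sq n.succ_ne_zero
    _ = (c * x) ^ (2 * (n + 1)) / (2 * (n + 1))! := by
        rw [← pow_mul, mul_pow, mul_div_assoc]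

/-- `a (cosh x - 1) ≤ cosh (√a · x)` for `a ≥ 1`. -/
theorem cosh_scaling_ineq (a x : ℝ) (ha : 1 ≤ a) :
    a * (Real.cosh x - 1) ≤ Real.cosh (Real.sqrt a * x) := by
  have h_sqrt : 1 ≤ |√a| := (Real.one_le_sqrt.mpr ha).trans (le_abs_self _)
  calc a * (Real.cosh x - 1) = √a ^ 2 * (Real.cosh x - 1) := by
        rw [Real.sq_sqrt (zero_le_one.trans ha)]
    _ ≤ Real.cosh (√a * x) - 1 := sq_mul_cosh_sub_one_le h_sqrt x
    _ ≤ Real.cosh (√a * x) := sub_le_self _ zero_le_one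
end

section
/- Let V be a nonempty finite type, ω : V → V → ℝ symmetric with ω x y ≥ 0 and ω x x = 0 for all x, y, and set μ(x) = ∑_y ω x y; assume μ(x) > 0 for all x. Let φ : V → ℝ be strictly positive and let h ∈ ℝ satisfy φ(x)/φ(y) + φ(y)/φ(x) − 2 ≤ h whenever ω x y > 0. Then for every g : V → ℝ, ∑_x μ(x) · g(x) · (𝓛_φ g)(x) ≤ h · ∑_x μ(x) · g(x)², where (𝓛_φ g)(x) = φ(x) · μ(x)⁻¹ · ∑_y ω x y · (g(y)/φ(y) − g(x)/φ(x)). -/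
/-!
Summation by parts turns `⟨g, -𝓛_φ g⟩` into the Dirichlet form of `φ g` and `g / φ`. On an edge
carrying the values `a, b` of `g` and `s, t` of `φ`, the product of the two increments is
`a² + b² - r a b` with `r = s / t + t / s`, and `2 a b ≤ a² + b²` bounds it below by
`-(r - 2) / 2 * (a² + b²)`. Summing over the edges gives the bound with the constant `h / 2`, which
is at most `h` because `r ≥ 2` on any edge.
-/

section Symmetric

variable {V R : Type*} [Fintype V]

theorem two_mul_sum_sum_mul_of_symm [NonAssocSemiring R] {ω : V → V → R}
    (hsym : ∀ x y, ω x y = ω y x) (a : V → V → R) :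
    2 * ∑ x, ∑ y, ω x y * a x y = ∑ x, ∑ y, ω x y * (a x y + a y x) := by
  have hswap : ∑ x, ∑ y, ω x y * a y x = ∑ x, ∑ y, ω x y * a x y := by
    rw [Finset.sum_comm]
    simp only [hsym]
  simp only [mul_add, Finset.sum_add_distrib, hswap, two_mul]

end Symmetric

section Field

variable {V K : Type*} [Fintype V] [Field K]

/-- The Dirichlet form of a weighted graph with conductances `ω`. The sum runs over ordered pairs,
so each edge is counted twice, whence the division by two. -/
def dirichletForm (ω : V → V → K) (f g : V → K) : K :=
  (∑ x, ∑ y, ω x y * ((f y - f x) * (g y - g x))) / 2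

/-- The Davies-tilted generator `𝓛_φ = φ 𝓛 (φ⁻¹ ·)`, where `𝓛` is the generator of the random walk
with conductances `ω` and speed measure `μ`. The constant-speed walk is the case in which `μ x` is
the total conductance at `x`. -/
def tiltedGenerator (ω : V → V → K) (μ φ g : V → K) (x : V) : K :=
  φ x * (μ x)⁻¹ * ∑ y, ω x y * (g y / φ y - g x / φ x)

theorem sum_mul_sum_mul_sub_eq_neg_dirichletForm [NeZero (2 : K)] {ω : V → V → K}
    (hsym : ∀ x y, ω x y = ω y x) (f g : V → K) :
    ∑ x, f x * ∑ y, ω x y * (g y - g x) = -dirichletForm ω f g := by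
  have hdouble : 2 * ∑ x, f x * ∑ y, ω x y * (g y - g x) =
      -∑ x, ∑ y, ω x y * ((f y - f x) * (g y - g x)) := by
    calc 2 * ∑ x, f x * ∑ y, ω x y * (g y - g x)
        = 2 * ∑ x, ∑ y, ω x y * (f x * (g y - g x)) := by
          simp only [Finset.mul_sum, mul_left_comm]
      _ = ∑ x, ∑ y, ω x y * (f x * (g y - g x) + f y * (g x - g y)) :=
          two_mul_sum_sum_mul_of_symm hsym _
      _ = -∑ x, ∑ y, ω x y * ((f y - f x) * (g y - g x)) := by
          simp only [← Finset.sum_neg_distrib]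
          refine Finset.sum_congr rfl fun x _ => Finset.sum_congr rfl fun y _ => ?_
          ring
  rw [dirichletForm, ← neg_div, ← hdouble, mul_div_cancel_left₀ _ two_ne_zero]

theorem sum_mul_tiltedGenerator [NeZero (2 : K)] {ω : V → V → K}
    (hsym : ∀ x y, ω x y = ω y x) {μ : V → K} (hμ : ∀ x, μ x ≠ 0) (φ f g : V → K) :
    ∑ x, μ x * f x * tiltedGenerator ω μ φ g x = -dirichletForm ω (φ * f) (g / φ) := by
  rw [← sum_mul_sum_mul_sub_eq_neg_dirichletForm hsym]
  refine Finset.sum_congr rfl fun x _ => ?_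
  have hμx := hμ x
  simp only [tiltedGenerator, Pi.mul_apply, Pi.div_apply]
  field_simp

end Field

section LinearOrderedField

variable {V K : Type*} [Field K] [LinearOrder K] [IsStrictOrderedRing K]

theorem div_add_div_swap_sub_two_nonneg {s t : K} (hs : 0 < s) (ht : 0 < t) :
    0 ≤ s / t + t / s - 2 := by
  have hsq : s / t + t / s - 2 = (s - t) ^ 2 / (s * t) := by
    field_simp
    ring
  rw [hsq]
  positivity

theorem neg_mul_sq_add_sq_le_tilted_increment_mul {s t : K} (hs : 0 < s) (ht : 0 < t) (a b : K) :
    -((s / t + t / s - 2) / 2 * (a ^ 2 + b ^ 2)) ≤ (t * b - s * a) * (b / t - a / s) := by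
  have hexpand : (t * b - s * a) * (b / t - a / s) =
      a ^ 2 + b ^ 2 - (s / t + t / s) * (a * b) := by
    field_simp
    ring
  have hamgm : (s / t + t / s) * (2 * a * b) ≤ (s / t + t / s) * (a ^ 2 + b ^ 2) :=
    mul_le_mul_of_nonneg_left (two_mul_le_add_sq a b) (by positivity)
  linarith

variable [Fintype V] {ω : V → V → K} {φ : V → K} {h : K}

theorem neg_half_mul_sum_le_dirichletForm_tilted (hsym : ∀ x y, ω x y = ω y x)
    (hnn : ∀ x y, 0 ≤ ω x y) (hφ : ∀ x, 0 < φ x)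
    (hh : ∀ x y, 0 < ω x y → φ x / φ y + φ y / φ x - 2 ≤ h) (g : V → K) :
    -(h / 2 * ∑ x, (∑ y, ω x y) * g x ^ 2) ≤ dirichletForm ω (φ * g) (g / φ) := by
  have hedge : ∀ x y, ω x y * -(h / 2 * (g x ^ 2 + g y ^ 2)) ≤
      ω x y * ((φ y * g y - φ x * g x) * (g y / φ y - g x / φ x)) := by
    intro x y
    rcases (hnn x y).eq_or_lt with hzero | hpos
    · simp only [← hzero, zero_mul, le_refl]
    · refine mul_le_mul_of_nonneg_left (le_trans ?_
        (neg_mul_sq_add_sq_le_tilted_increment_mul (hφ x) (hφ y) (g x) (g y))) hpos.le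
      have := hh x y hpos
      gcongr
  have hmass : 2 * ∑ x, (∑ y, ω x y) * g x ^ 2 = ∑ x, ∑ y, ω x y * (g x ^ 2 + g y ^ 2) := by
    simp only [Finset.sum_mul]
    exact two_mul_sum_sum_mul_of_symm hsym fun x _ => g x ^ 2
  rw [dirichletForm, le_div_iff₀ two_pos]
  calc -(h / 2 * ∑ x, (∑ y, ω x y) * g x ^ 2) * 2
      = -(h / 2) * (2 * ∑ x, (∑ y, ω x y) * g x ^ 2) := by ring
    _ = ∑ x, ∑ y, ω x y * -(h / 2 * (g x ^ 2 + g y ^ 2)) := by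
        simp only [hmass, Finset.mul_sum, ← neg_mul, mul_left_comm]
    _ ≤ _ := Finset.sum_le_sum fun x _ => Finset.sum_le_sum fun y _ => hedge x y

theorem nonneg_of_forall_tilt_le {x : V} (hpos : 0 < ∑ y, ω x y) (hφ : ∀ x, 0 < φ x)
    (hh : ∀ x y, 0 < ω x y → φ x / φ y + φ y / φ x - 2 ≤ h) : 0 ≤ h := by
  obtain ⟨y, -, hxy⟩ : ∃ y ∈ Finset.univ, 0 < ω x y :=
    Finset.exists_lt_of_sum_lt (by simpa only [Finset.sum_const_zero] using hpos)
  exact (div_add_div_swap_sub_two_nonneg (hφ x) (hφ y)).trans (hh x y hxy)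

theorem tilted_csrw_form_bound_general (hsym : ∀ x y, ω x y = ω y x) (hnn : ∀ x y, 0 ≤ ω x y)
    {μ : V → K} (hμ : ∀ x, μ x = ∑ y, ω x y) (hμpos : ∀ x, 0 < μ x) (hφ : ∀ x, 0 < φ x)
    (hh : ∀ x y, 0 < ω x y → φ x / φ y + φ y / φ x - 2 ≤ h) (g : V → K) :
    ∑ x, μ x * g x * tiltedGenerator ω μ φ g x ≤ h / 2 * ∑ x, μ x * g x ^ 2 := by
  rw [sum_mul_tiltedGenerator hsym fun x => (hμpos x).ne', neg_le]
  simpa only [hμ] using neg_half_mul_sum_le_dirichletForm_tilted hsym hnn hφ hh g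

end LinearOrderedField

open Finset in
/-- Quadratic form bound (2.4): `⟨g, 𝓛_φ g⟩_{ℓ²(V,μ)} ≤ h ‖g‖²_{ℓ²(V,μ)}`
for the Davies-tilted CSRW generator on a finite weighted graph. -/
theorem tilted_csrw_form_bound {V : Type*} [Fintype V] [Nonempty V]
    (ω : V → V → ℝ) (hsym : ∀ x y, ω x y = ω y x) (hnn : ∀ x y, 0 ≤ ω x y)
    (hdiag : ∀ x, ω x x = 0)
    (μ : V → ℝ) (hμ : ∀ x, μ x = ∑ y, ω x y) (hμpos : ∀ x, 0 < μ x)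
    (φ : V → ℝ) (hφ : ∀ x, 0 < φ x)
    (h : ℝ) (hh : ∀ x y, 0 < ω x y → φ x / φ y + φ y / φ x - 2 ≤ h)
    (g : V → ℝ) :
    ∑ x, μ x * g x * (φ x * (μ x)⁻¹ * ∑ y, ω x y * (g y / φ y - g x / φ x))
      ≤ h * ∑ x, μ x * g x ^ 2 := by
  have hh_nonneg : 0 ≤ h :=
    nonneg_of_forall_tilt_le (hμ (Classical.arbitrary V) ▸ hμpos _) hφ hh
  exact (tilted_csrw_form_bound_general hsym hnn hμ hμpos hφ hh g).trans <|
    mul_le_mul_of_nonneg_right (half_le_self hh_nonneg) <|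
      sum_nonneg fun x _ => mul_nonneg (hμpos x).le (sq_nonneg (g x))
end

section
/- Let Z : ℤ → ℝ satisfy Z i ≥ 1 for all i. Equip ℤ² with nearest-neighbour edges and conductances ω given by: ω(x, x ± (0,1)) = 1 (vertical edges) and ω(x, x + (1,0)) = Z(x₂) (horizontal edges on the line with second coordinate x₂). Then for every L ≥ 1 and every nearest-neighbour path z₀ = (0,0), z₁, …, z_l = (L, 0) in ℤ², writing k for the maximum of |second coordinate of z_j| over 0 ≤ j ≤ l, one has ∑_{j=0}^{l−1} min(1, ω(z_j, z_{j+1})^{−1/2}) ≥ 2k + L · (max_{−k ≤ i ≤ k} Z i)^{−1/2}. -/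
/-!
The length of a path splits into a vertical part, which is at least twice the height reached, and a
horizontal part. The latter contains at least `L` steps, and a path confined to heights at most `k`
pays for each of them at least the length of an edge of conductance `max_{-k ≤ i ≤ k} Z i`.
-/

theorem dist_add_dist_le_range_sum_dist {X : Type*} [PseudoMetricSpace X] (f : ℕ → X) {p l : ℕ}
    (hp : p ≤ l) :
    dist (f 0) (f p) + dist (f p) (f l) ≤ ∑ j ∈ Finset.range l, dist (f j) (f (j + 1)) := by
  rw [← Finset.sum_range_add_sum_Ico _ hp]
  exact add_le_add (dist_le_range_sum_dist f p) (dist_le_Ico_sum_dist f hp)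

/-- The length `min(1, c^{-1/2})` of an edge of conductance `c` in the chemical distance.
It is meaningful for `0 < c` only: `edgeLength 0 = 0` by the convention for `Real.rpow`. -/
noncomputable def edgeLength (c : ℝ) : ℝ :=
  min 1 (c ^ (-(1 / 2) : ℝ))

theorem edgeLength_one : edgeLength 1 = 1 := by
  rw [edgeLength, Real.one_rpow, min_self]

theorem edgeLength_of_one_le {c : ℝ} (hc : 1 ≤ c) : edgeLength c = c ^ (-(1 / 2) : ℝ) :=
  min_eq_right (Real.rpow_le_one_of_one_le_of_nonpos hc (by norm_num))

theorem edgeLength_nonneg {c : ℝ} (hc : 0 ≤ c) : 0 ≤ edgeLength c :=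
  le_min zero_le_one (Real.rpow_nonneg hc _)

theorem edgeLength_le_edgeLength {c d : ℝ} (hc : 0 < c) (hcd : c ≤ d) :
    edgeLength d ≤ edgeLength c :=
  min_le_min_left 1 (Real.rpow_le_rpow_of_nonpos hc hcd (by norm_num))

theorem eq_up_or_down_or_right_or_left {x y : ℤ × ℤ}
    (h : |y.1 - x.1| + |y.2 - x.2| = 1) :
    y = (x.1, x.2 + 1) ∨ y = (x.1, x.2 - 1) ∨ y = (x.1 + 1, x.2) ∨ y = (x.1 - 1, x.2) := by
  simp only [Prod.ext_iff]
  rcases abs_cases (y.1 - x.1) with h₁ | h₁ <;> rcases abs_cases (y.2 - x.2) with h₂ | h₂ <;> omega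

/-- Layered conductances on the nearest-neighbour edges of `ℤ²`: vertical edges have conductance
`1`, and horizontal edges at height `i` have conductance `Z i`. The value of `ω` at pairs of
points that are not neighbours is arbitrary. -/
structure IsLayeredConductance (Z : ℤ → ℝ) (ω : ℤ × ℤ → ℤ × ℤ → ℝ) : Prop where
  up : ∀ x : ℤ × ℤ, ω x (x.1, x.2 + 1) = 1
  down : ∀ x : ℤ × ℤ, ω x (x.1, x.2 - 1) = 1
  right : ∀ x : ℤ × ℤ, ω x (x.1 + 1, x.2) = Z x.2
  left : ∀ x : ℤ × ℤ, ω x (x.1 - 1, x.2) = Z x.2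

namespace IsLayeredConductance

variable {Z : ℤ → ℝ} {ω : ℤ × ℤ → ℤ × ℤ → ℝ}

theorem edgeLength_eq (hω : IsLayeredConductance Z ω) {x y : ℤ × ℤ}
    (hxy : |y.1 - x.1| + |y.2 - x.2| = 1) :
    edgeLength (ω x y) = dist x.2 y.2 + dist x.1 y.1 * edgeLength (Z x.2) := by
  rcases eq_up_or_down_or_right_or_left hxy with rfl | rfl | rfl | rfl
  · simp [hω.up, edgeLength_one]
  · simp [hω.down, edgeLength_one]
  · simp [hω.right]
  · simp [hω.left]

theorem dist_add_dist_add_dist_mul_le_sum_edgeLength (hω : IsLayeredConductance Z ω)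
    {z : ℕ → ℤ × ℤ} {l p : ℕ} {M : ℝ} (hp : p ≤ l)
    (hpath : ∀ j < l, |(z (j + 1)).1 - (z j).1| + |(z (j + 1)).2 - (z j).2| = 1)
    (hpos : ∀ j ≤ l, 0 < Z (z j).2) (hM : ∀ j ≤ l, Z (z j).2 ≤ M) :
    dist (z 0).2 (z p).2 + dist (z p).2 (z l).2 + dist (z 0).1 (z l).1 * edgeLength M ≤
      ∑ j ∈ Finset.range l, edgeLength (ω (z j) (z (j + 1))) := by
  have hM_nonneg : 0 ≤ edgeLength M :=
    edgeLength_nonneg ((hpos 0 l.zero_le).le.trans (hM 0 l.zero_le))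
  calc
    _ ≤ ∑ j ∈ Finset.range l, dist (z j).2 (z (j + 1)).2 +
          (∑ j ∈ Finset.range l, dist (z j).1 (z (j + 1)).1) * edgeLength M := by
      gcongr
      · exact dist_add_dist_le_range_sum_dist (fun j ↦ (z j).2) hp
      · exact dist_le_range_sum_dist (fun j ↦ (z j).1) l
    _ = ∑ j ∈ Finset.range l,
          (dist (z j).2 (z (j + 1)).2 + dist (z j).1 (z (j + 1)).1 * edgeLength M) := by
      rw [Finset.sum_mul, Finset.sum_add_distrib]
    _ ≤ ∑ j ∈ Finset.range l, edgeLength (ω (z j) (z (j + 1))) := by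
      refine Finset.sum_le_sum fun j hj ↦ ?_
      have hjl : j < l := Finset.mem_range.mp hj
      rw [hω.edgeLength_eq (hpath j hjl)]
      gcongr
      exact edgeLength_le_edgeLength (hpos j hjl.le) (hM j hjl.le)

end IsLayeredConductance

theorem chemical_distance_lower_bound_general {Z : ℤ → ℝ} (hZ : ∀ i, 0 < Z i)
    {ω : ℤ × ℤ → ℤ × ℤ → ℝ} (hω : IsLayeredConductance Z ω)
    {L : ℤ} {l : ℕ} {z : ℕ → ℤ × ℤ} (h0 : z 0 = (0, 0)) (hend : z l = (L, 0))
    (hpath : ∀ j < l, |(z (j + 1)).1 - (z j).1| + |(z (j + 1)).2 - (z j).2| = 1)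
    {k : ℤ} (hknn : 0 ≤ k)
    (hk : k = (Finset.range (l + 1)).sup' Finset.nonempty_range_add_one fun j ↦ |(z j).2|) :
    2 * (k : ℝ) + |(L : ℝ)| *
        edgeLength ((Finset.Icc (-k) k).sup' (Finset.nonempty_Icc.mpr (by linarith)) Z) ≤
      ∑ j ∈ Finset.range l, edgeLength (ω (z j) (z (j + 1))) := by
  obtain ⟨p, hp, hpk⟩ :=
    Finset.exists_mem_eq_sup' Finset.nonempty_range_add_one fun j ↦ |(z j).2|
  have hheight : ∀ j ≤ l, |(z j).2| ≤ k := fun j hj ↦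
    hk ▸ Finset.le_sup' (fun j ↦ |(z j).2|) (Finset.mem_range_succ_iff.mpr hj)
  have hconductance : ∀ j ≤ l, Z (z j).2 ≤
      (Finset.Icc (-k) k).sup' (Finset.nonempty_Icc.mpr (by linarith)) Z := fun j hj ↦
    Finset.le_sup' Z (Finset.mem_Icc.mpr (abs_le.mp (hheight j hj)))
  have hbound := hω.dist_add_dist_add_dist_mul_le_sum_edgeLength
    (Finset.mem_range_succ_iff.mp hp) hpath (fun j _ ↦ hZ (z j).2) hconductance
  have hpeak : dist (z p).2 0 = k := by
    rw [hk, hpk, Int.dist_eq, Int.cast_zero, sub_zero, Int.cast_abs]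
  have hspan : dist 0 L = |(L : ℝ)| := by
    rw [dist_comm, Int.dist_eq, Int.cast_zero, sub_zero]
  simpa only [h0, hend, dist_comm 0 (z p).2, hpeak, hspan, ← two_mul] using hbound

open Finset in
/-- Deterministic lower-bound core of Lemma 1.9: any nearest-neighbour path in `ℤ²`
from `(0,0)` to `(L,0)` reaching maximal height `k` has `ω`-length at least
`2k + L · (max_{-k ≤ i ≤ k} Z i)^{-1/2}`. -/
theorem chemical_distance_lower_bound (Z : ℤ → ℝ) (hZ : ∀ i, 1 ≤ Z i)
    (ω : ℤ × ℤ → ℤ × ℤ → ℝ)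
    (hvu : ∀ x : ℤ × ℤ, ω x (x.1, x.2 + 1) = 1)
    (hvd : ∀ x : ℤ × ℤ, ω x (x.1, x.2 - 1) = 1)
    (hhr : ∀ x : ℤ × ℤ, ω x (x.1 + 1, x.2) = Z x.2)
    (hhl : ∀ x : ℤ × ℤ, ω x (x.1 - 1, x.2) = Z x.2)
    (L : ℤ) (hL : 1 ≤ L)
    (l : ℕ) (z : ℕ → ℤ × ℤ)
    (h0 : z 0 = (0, 0)) (hend : z l = (L, 0))
    (hpath : ∀ j < l, |(z (j + 1)).1 - (z j).1| + |(z (j + 1)).2 - (z j).2| = 1)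
    (k : ℤ) (hknn : 0 ≤ k)
    (hk : k = (Finset.range (l + 1)).sup'
      (Finset.nonempty_range_iff.mpr (Nat.succ_ne_zero l)) fun j => |(z j).2|) :
    2 * (k : ℝ) +
        (L : ℝ) * ((Finset.Icc (-k) k).sup'
          (Finset.nonempty_Icc.mpr (by linarith)) Z) ^ (-(1 / 2) : ℝ)
      ≤ ∑ j ∈ Finset.range l, min 1 ((ω (z j) (z (j + 1))) ^ (-(1 / 2) : ℝ)) := by
  have hone : 1 ≤ (Finset.Icc (-k) k).sup' (Finset.nonempty_Icc.mpr (by linarith)) Z :=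
    (hZ 0).trans (Finset.le_sup' Z (Finset.mem_Icc.mpr ⟨neg_nonpos.mpr hknn, hknn⟩))
  rw [← edgeLength_of_one_le hone]
  calc
    _ ≤ 2 * (k : ℝ) + |(L : ℝ)| *
          edgeLength ((Finset.Icc (-k) k).sup' (Finset.nonempty_Icc.mpr (by linarith)) Z) := by
      gcongr
      exacts [edgeLength_nonneg (zero_le_one.trans hone), le_abs_self _]
    _ ≤ _ := chemical_distance_lower_bound_general (fun i ↦ one_pos.trans_le (hZ i))
      ⟨hvu, hvd, hhr, hhl⟩ h0 hend hpath hknn hk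
end

section
/- Let Z : ℤ → ℝ satisfy Z i ≥ 1 for all i. Equip ℤ² with nearest-neighbour edges and conductances ω given by: ω(x, x ± (0,1)) = 1 (vertical edges) and ω(x, x + (1,0)) = Z(x₂) (horizontal edges on the line with second coordinate x₂). Then for every L ≥ 1 and every K ≥ 0 there exists a nearest-neighbour path z₀ = (0,0), z₁, …, z_l = (L, 0) in ℤ² with ∑_{j=0}^{l−1} min(1, ω(z_j, z_{j+1})^{−1/2}) ≤ 2K + L · (max_{−K ≤ i ≤ K} Z i)^{−1/2}. -/
/-! Every edge costs at most `1`, so moving vertically between row `0` and a row `i` with `|i| ≤ K`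
costs at most `K`, whatever the vertical conductances. Taking for `i` a row of maximal conductance
in `{-K, …, K}`, the path that moves to row `i`, follows it for `L` edges and comes back has the
required length. -/

section WalkWeight

variable {V M : Type*} {G : SimpleGraph V} [AddCommMonoid M]

/-- The total weight of a walk whose step from `u` to `v` costs `w u v`. The weight need not be
symmetric: each edge is charged in the direction in which the walk crosses it. -/
def walkWeight (w : V → V → M) {u v : V} (p : G.Walk u v) : M :=
  (p.darts.map fun d => w d.fst d.snd).sum

theorem walkWeight_append (w : V → V → M) {u v x : V} (p : G.Walk u v) (q : G.Walk v x) :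
    walkWeight w (p.append q) = walkWeight w p + walkWeight w q := by
  simp [walkWeight]

theorem walkWeight_eq_sum_getVert (w : V → V → M) {u v : V} (p : G.Walk u v) :
    walkWeight w p = ∑ j ∈ Finset.range p.length, w (p.getVert j) (p.getVert (j + 1)) := by
  induction p with
  | nil => simp [walkWeight]
  | cons h p ih =>
    rw [SimpleGraph.Walk.length_cons, Finset.sum_range_succ', add_comm]
    simpa [walkWeight] using congrArg (w _ _ + ·) ih

theorem walkWeight_le_length_nsmul [PartialOrder M] [IsOrderedAddMonoid M] {w : V → V → M} {c : M}
    (hw : ∀ u v, G.Adj u v → w u v ≤ c) {u v : V} (p : G.Walk u v) :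
    walkWeight w p ≤ p.length • c := by
  simpa [walkWeight] using
    List.sum_le_card_nsmul (p.darts.map fun d => w d.fst d.snd) c
      (List.forall_mem_map.mpr fun d _ => hw d.fst d.snd d.adj)

/-- The walk visiting the first `n + 1` terms of a sequence of successively adjacent vertices. -/
def walkAlong {f : ℕ → V} (hf : ∀ k, G.Adj (f k) (f (k + 1))) : (n : ℕ) → G.Walk (f 0) (f n)
  | 0 => .nil
  | n + 1 => (walkAlong hf n).concat (hf n)

theorem length_walkAlong {f : ℕ → V} (hf : ∀ k, G.Adj (f k) (f (k + 1))) (n : ℕ) :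
    (walkAlong hf n).length = n := by
  induction n with
  | zero => rfl
  | succ n ih => rw [walkAlong, SimpleGraph.Walk.length_concat, ih]

theorem walkWeight_walkAlong (w : V → V → M) {f : ℕ → V} (hf : ∀ k, G.Adj (f k) (f (k + 1)))
    (n : ℕ) : walkWeight w (walkAlong hf n) = ∑ k ∈ Finset.range n, w (f k) (f (k + 1)) := by
  induction n with
  | zero => rfl
  | succ n ih =>
    rw [Finset.sum_range_succ, ← ih]
    simp [walkWeight, walkAlong]

end WalkWeight

/-- The nearest-neighbour graph on `ℤ²`: two points are adjacent when their `ℓ¹` distance is `1`. -/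
def squareLattice : SimpleGraph (ℤ × ℤ) where
  Adj x y := |y.1 - x.1| + |y.2 - x.2| = 1
  symm := ⟨fun x y h => by rwa [abs_sub_comm x.1, abs_sub_comm x.2]⟩
  loopless := ⟨fun x h => by simp at h⟩

theorem squareLattice_adj_right (x y : ℤ) : squareLattice.Adj (x, y) (x + 1, y) := by
  simp [squareLattice]

theorem squareLattice_adj_up (x y : ℤ) : squareLattice.Adj (x, y) (x, y + 1) := by
  simp [squareLattice]

theorem exists_vertical_walk_length_eq (x y y' : ℤ) :
    ∃ p : squareLattice.Walk (x, y) (x, y'), p.length = (y' - y).natAbs := by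
  wlog h : y ≤ y' generalizing y y'
  · obtain ⟨p, hp⟩ := this y' y (le_of_not_ge h)
    exact ⟨p.reverse, by rw [p.length_reverse, hp, ← Int.natAbs_neg, neg_sub]⟩
  obtain ⟨n, rfl⟩ := Int.le.dest h
  have hf (k : ℕ) : squareLattice.Adj (x, y + k) (x, y + (k + 1 : ℕ)) := by
    simpa [add_assoc] using squareLattice_adj_up x (y + k)
  exact ⟨(walkAlong hf n).copy (by simp) rfl, by simp [length_walkAlong]⟩

theorem exists_horizontal_walk_weight_eq {M : Type*} [AddCommMonoid M] (w : ℤ × ℤ → ℤ × ℤ → M)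
    (x y : ℤ) (n : ℕ) :
    ∃ p : squareLattice.Walk (x, y) (x + n, y),
      walkWeight w p = ∑ k ∈ Finset.range n, w (x + k, y) (x + k + 1, y) := by
  have hf (k : ℕ) : squareLattice.Adj (x + k, y) (x + (k + 1 : ℕ), y) := by
    simpa [add_assoc] using squareLattice_adj_right (x + k) y
  refine ⟨(walkAlong hf n).copy (by simp) rfl, ?_⟩
  simpa [walkWeight, add_assoc] using walkWeight_walkAlong w hf n

theorem exists_walk_weight_le_via_row {M : Type*} [AddCommMonoid M] [PartialOrder M]
    [IsOrderedAddMonoid M] {w : ℤ × ℤ → ℤ × ℤ → M} {c : M}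
    (hw : ∀ u v, squareLattice.Adj u v → w u v ≤ c) (x y i : ℤ) (n : ℕ) :
    ∃ p : squareLattice.Walk (x, y) (x + n, y),
      walkWeight w p ≤
        (2 * (i - y).natAbs) • c + ∑ k ∈ Finset.range n, w (x + k, i) (x + k + 1, i) := by
  obtain ⟨climb, hclimb⟩ := exists_vertical_walk_length_eq x y i
  obtain ⟨traverse, htraverse⟩ := exists_horizontal_walk_weight_eq w x i n
  obtain ⟨descend, hdescend⟩ := exists_vertical_walk_length_eq (x + n) i y
  refine ⟨climb.append (traverse.append descend), ?_⟩
  calc walkWeight w (climb.append (traverse.append descend))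
      = walkWeight w climb + walkWeight w descend + walkWeight w traverse := by
        rw [walkWeight_append, walkWeight_append, add_comm (walkWeight w traverse), add_assoc]
    _ ≤ climb.length • c + descend.length • c + walkWeight w traverse := by
        gcongr <;> exact walkWeight_le_length_nsmul hw _
    _ = _ := by
        rw [hclimb, hdescend, htraverse, ← neg_sub i y, Int.natAbs_neg, ← add_nsmul, two_mul]

/-- The cost `min(1, ω(x, y)^{-1/2})` of the step from `x` to `y` in the chemical distance of the
conductances `ω`. -/
noncomputable def chemicalWeight {V : Type*} (ω : V → V → ℝ) (x y : V) : ℝ :=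
  min 1 (ω x y ^ (-(1 / 2) : ℝ))

theorem chemicalWeight_le_one {V : Type*} (ω : V → V → ℝ) (x y : V) : chemicalWeight ω x y ≤ 1 :=
  min_le_left _ _

theorem chemicalWeight_le_rpow {V : Type*} {ω : V → V → ℝ} {x y : V} {a : ℝ} (ha : 0 < a)
    (h : a ≤ ω x y) : chemicalWeight ω x y ≤ a ^ (-(1 / 2) : ℝ) :=
  (min_le_right _ _).trans (Real.rpow_le_rpow_of_nonpos ha h (by norm_num))

theorem chemical_distance_upper_bound_general (Z : ℤ → ℝ) (hZ : ∀ i, 0 < Z i)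
    (ω : ℤ × ℤ → ℤ × ℤ → ℝ) (hω : ∀ x : ℤ × ℤ, Z x.2 ≤ ω x (x.1 + 1, x.2))
    (L : ℤ) (hL : 0 ≤ L) (K : ℤ) (hK : 0 ≤ K) :
    ∃ (l : ℕ) (z : ℕ → ℤ × ℤ),
      z 0 = (0, 0) ∧ z l = (L, 0) ∧
      (∀ j < l, |(z (j + 1)).1 - (z j).1| + |(z (j + 1)).2 - (z j).2| = 1) ∧
      ∑ j ∈ Finset.range l, min 1 ((ω (z j) (z (j + 1))) ^ (-(1 / 2) : ℝ))
        ≤ 2 * (K : ℝ) +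
            (L : ℝ) * ((Finset.Icc (-K) K).sup'
              (Finset.nonempty_Icc.mpr (by linarith)) Z) ^ (-(1 / 2) : ℝ) := by
  obtain ⟨i, hi, hmax⟩ := Finset.exists_mem_eq_sup' (s := Finset.Icc (-K) K)
    (Finset.nonempty_Icc.mpr (by linarith)) Z
  lift L to ℕ using hL
  obtain ⟨p, hp⟩ := exists_walk_weight_le_via_row
    (fun u v _ => chemicalWeight_le_one ω u v) 0 0 i L
  have hiK : ((i - 0).natAbs : ℝ) ≤ K := by
    rw [sub_zero, Nat.cast_natAbs]
    exact_mod_cast abs_le.mpr (Finset.mem_Icc.mp hi)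
  have hrow : ∑ k ∈ Finset.range L, chemicalWeight ω (0 + (k : ℤ), i) (0 + (k : ℤ) + 1, i)
      ≤ L * Z i ^ (-(1 / 2) : ℝ) := by
    simpa using Finset.sum_le_card_nsmul (Finset.range L) _ _
      fun k _ => chemicalWeight_le_rpow (hZ i) (hω (0 + (k : ℤ), i))
  refine ⟨p.length, p.getVert, p.getVert_zero, p.getVert_length.trans (by simp),
    fun j hj => p.adj_getVert_succ hj, ?_⟩
  calc _ = walkWeight (chemicalWeight ω) p := (walkWeight_eq_sum_getVert _ p).symm
    _ ≤ _ := hp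
    _ ≤ 2 * (K : ℝ) + L * Z i ^ (-(1 / 2) : ℝ) := by
      rw [nsmul_one, Nat.cast_mul, Nat.cast_ofNat]
      gcongr
    _ = _ := by rw [hmax, Int.cast_natCast]

open Finset in
/-- Deterministic upper-bound core of Lemma 1.9: there exists a nearest-neighbour
path in `ℤ²` from `(0,0)` to `(L,0)` of `ω`-length at most
`2K + L · (max_{-K ≤ i ≤ K} Z i)^{-1/2}`. -/
theorem chemical_distance_upper_bound (Z : ℤ → ℝ) (hZ : ∀ i, 1 ≤ Z i)
    (ω : ℤ × ℤ → ℤ × ℤ → ℝ)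
    (hvu : ∀ x : ℤ × ℤ, ω x (x.1, x.2 + 1) = 1)
    (hvd : ∀ x : ℤ × ℤ, ω x (x.1, x.2 - 1) = 1)
    (hhr : ∀ x : ℤ × ℤ, ω x (x.1 + 1, x.2) = Z x.2)
    (hhl : ∀ x : ℤ × ℤ, ω x (x.1 - 1, x.2) = Z x.2)
    (L : ℤ) (hL : 1 ≤ L)
    (K : ℤ) (hK : 0 ≤ K) :
    ∃ (l : ℕ) (z : ℕ → ℤ × ℤ),
      z 0 = (0, 0) ∧ z l = (L, 0) ∧
      (∀ j < l, |(z (j + 1)).1 - (z j).1| + |(z (j + 1)).2 - (z j).2| = 1) ∧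
      ∑ j ∈ Finset.range l, min 1 ((ω (z j) (z (j + 1))) ^ (-(1 / 2) : ℝ))
        ≤ 2 * (K : ℝ) +
            (L : ℝ) * ((Finset.Icc (-K) K).sup'
              (Finset.nonempty_Icc.mpr (by linarith)) Z) ^ (-(1 / 2) : ℝ) := by
  exact chemical_distance_upper_bound_general Z (fun i => zero_lt_one.trans_le (hZ i)) ω
    (fun x => (hhr x).ge) L (zero_le_one.trans hL) K hK
end
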